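/- Let p₀ be the orthogonal projection onto the kernel of the Bott–Dirac operator B = D + F on L²(ℝ^d; 𝕊_d). Then p₀ is a rank-one projection, it commutes with the grading ι and with B, and on the orthogonal complement Im(1 − p₀) the restricted operator B satisfies B² ≥ 1. Hence the decomposition L² = Im(p₀) ⊕ Im(1−p₀) splits B into a zero operator on a one-dimensional space and an invertible operator (with spectral gap (−1,1)) on the complement. -/

import Mathlib

/-! Statement 17: the orthogonal projection `p₀` onto the kernel of the Bott–Dirac operator
`B = D + F` on `L²(ℝ^d; 𝕊_d)` is a rank-one projection commuting with the grading `ι` and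
with `B`, and on the orthogonal complement of the kernel one has `B² ≥ 1`: the decomposition
`L² = Im p₀ ⊕ Im (1−p₀)` splits `B` into zero on a one-dimensional space and an operator
with spectral gap `(−1,1)` on the complement. -/

noncomputable section
open MeasureTheory RealInnerProductSpace

/-- Euclidean `d`-space, the domain of the Bott–Dirac operator. -/
abbrev Ed (d : ℕ) := EuclideanSpace ℝ (Fin d)

variable {d : ℕ} {S : Type} [NormedAddCommGroup S] [InnerProductSpace ℝ S]

/-- The Dirac operator `D = Σ_j e_j ∂_j` on functions `ℝ^d → 𝕊_d`. -/
noncomputable def Dop (e : Fin d → S →L[ℝ] S) (f : Ed d → S) : Ed d → S :=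
  fun x => ∑ j, e j (fderiv ℝ f x (EuclideanSpace.single j 1))

/-- The potential `F = Σ_j x^j ε_j`. -/
noncomputable def Fop (ε : Fin d → S →L[ℝ] S) (f : Ed d → S) : Ed d → S :=
  fun x => ∑ j, x j • ε j (f x)

/-- The Bott–Dirac operator (supersymmetric harmonic oscillator) `B = D + F`. -/
noncomputable def Bop (e ε : Fin d → S →L[ℝ] S) (f : Ed d → S) : Ed d → S :=
  fun x => Dop e f x + Fop ε f x

/-- The bounded operator `ν = Σ_i e_i ε_i`. -/
noncomputable def nuOp (e ε : Fin d → S →L[ℝ] S) : S →L[ℝ] S :=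
  ∑ i, (e i).comp (ε i)

/-- The Gaussian ground state `x ↦ e^{−|x|²/2} · u`, where `u` is the vacuum vector. -/
noncomputable def gaussian (d : ℕ) {S : Type} [NormedAddCommGroup S] [InnerProductSpace ℝ S]
    (u : S) : Ed d → S :=
  fun x => Real.exp (-‖x‖ ^ 2 / 2) • u

/-- The orthogonal projection onto the span of the Gaussian ground state (the kernel of `B`). -/
noncomputable def kerProj (d : ℕ) {S : Type} [NormedAddCommGroup S] [InnerProductSpace ℝ S]
    (u : S) (f : Ed d → S) : Ed d → S :=
  fun x => ((∫ y, ⟪f y, gaussian d u y⟫) / ∫ y, ‖gaussian d u y‖ ^ 2) • gaussian d u x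

/-!
Write `a_j = ∂_j + x^j`. For `f` smooth with compact support, integration by parts and the Clifford
relations give `‖Bf‖² = ∑_j ‖a_j f‖² + ⟪f, (d + ν) f⟫`. Diagonalising `d + ν` on the fibre (it is
twice the number operator of the fermionic Fock space with vacuum `u`) bounds `‖Bf‖²` from below by
`∑_j ‖a_j f‖²` plus the norm squared of the part of `f` orthogonal to `u`.

* Gap: the component of `f` along `u` is a scalar function orthogonal to `e^{-|x|²/2}`, for which
  `∑_j ‖a_j φ‖² ≥ ‖φ‖²`. With `φ = e^{-|x|²/2} h` this reads
  `∫ e^{-|x|²} h² ≤ ∫ e^{-|x|²} |∇h|²`. The sharp Poincaré constant is `1/2`, so the cruder `π²/16`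
  obtained by rotating two independent Gaussian copies into each other is enough.
* Kernel: if `Bf = 0` then `‖B(χ_R f)‖ = ‖|∇χ_R| f‖ = O(1/R)` for cutoffs `χ_R`, so the lower bound
  vanishes identically in the limit. Thus `a_j f = 0` for all `j`, which makes `f` equal to
  `e^{-|x|²/2}` times a constant vector, and that vector is a multiple of `u`.
-/

section Poincare

open ProbabilityTheory

theorem sq_intervalIntegral_le {f : ℝ → ℝ} (hf : Continuous f) {a b : ℝ} (hab : a ≤ b) :
    (∫ t in a..b, f t) ^ 2 ≤ (b - a) * ∫ t in a..b, f t ^ 2 := by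
  rcases hab.eq_or_lt with rfl | hlt
  · simp
  set m := ∫ t in a..b, f t with hm
  have h_nonneg : 0 ≤ ∫ t in a..b, ((b - a) * f t - m) ^ 2 :=
    intervalIntegral.integral_nonneg hab fun t _ => sq_nonneg _
  have h_expand : ∫ t in a..b, ((b - a) * f t - m) ^ 2 =
      (b - a) * ((b - a) * (∫ t in a..b, f t ^ 2) - m ^ 2) := by
    calc ∫ t in a..b, ((b - a) * f t - m) ^ 2
        = ∫ t in a..b, ((b - a) ^ 2 * f t ^ 2 - 2 * (b - a) * m * f t + m ^ 2) := by
          congr with t; ring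
      _ = (b - a) ^ 2 * (∫ t in a..b, f t ^ 2) - 2 * (b - a) * m * m + (b - a) * m ^ 2 := by
          rw [intervalIntegral.integral_add, intervalIntegral.integral_sub,
            intervalIntegral.integral_const_mul, intervalIntegral.integral_const_mul]
          · simp [hm]
          all_goals exact Continuous.intervalIntegrable (by fun_prop) _ _
      _ = (b - a) * ((b - a) * (∫ t in a..b, f t ^ 2) - m ^ 2) := by ring
  linarith [nonneg_of_mul_nonneg_right (h_expand ▸ h_nonneg) (sub_pos.2 hlt)]

variable {E : Type*} [NormedAddCommGroup E]

section Rotation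

variable [NormedSpace ℝ E] {h : E → ℝ}

theorem sub_sq_le_intervalIntegral_rotation (hh : ContDiff ℝ 1 h) (p : E × E) :
    (h p.2 - h p.1) ^ 2 ≤ Real.pi / 2 * ∫ θ in (0 : ℝ)..(Real.pi / 2),
      (fderiv ℝ h (ContinuousLinearMap.rotation θ p).1
        (ContinuousLinearMap.rotation θ p).2) ^ 2 := by
  have h_cont : Continuous fun θ : ℝ => fderiv ℝ h (ContinuousLinearMap.rotation θ p).1
      (ContinuousLinearMap.rotation θ p).2 := by
    have := hh.continuous_fderiv one_ne_zero
    simp only [ContinuousLinearMap.rotation_apply]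
    fun_prop
  have h_deriv (θ : ℝ) : HasDerivAt (fun θ : ℝ => h (ContinuousLinearMap.rotation θ p).1)
      (fderiv ℝ h (ContinuousLinearMap.rotation θ p).1
        (ContinuousLinearMap.rotation θ p).2) θ :=
    (hh.differentiable one_ne_zero _).hasFDerivAt.comp_hasDerivAt θ
      (((Real.hasDerivAt_cos θ).smul_const p.1).add ((Real.hasDerivAt_sin θ).smul_const p.2))
  have h_ftc := intervalIntegral.integral_eq_sub_of_hasDerivAt (a := 0) (b := Real.pi / 2)
    (fun θ _ => h_deriv θ) (h_cont.intervalIntegrable _ _)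
  have h_ends : h p.2 - h p.1 = ∫ θ in (0 : ℝ)..(Real.pi / 2),
      fderiv ℝ h (ContinuousLinearMap.rotation θ p).1 (ContinuousLinearMap.rotation θ p).2 := by
    rw [h_ftc]; simp [ContinuousLinearMap.rotation_apply]
  rw [h_ends]
  simpa only [sub_zero] using sq_intervalIntegral_le h_cont Real.pi_div_two_pos.le

theorem norm_rotation_snd_le (θ : ℝ) (p : E × E) :
    ‖(ContinuousLinearMap.rotation θ p).2‖ ≤ ‖p.1‖ + ‖p.2‖ := by
  rw [ContinuousLinearMap.rotation_apply]
  refine (norm_add_le _ _).trans ?_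
  rw [norm_smul, norm_smul, norm_neg, Real.norm_eq_abs, Real.norm_eq_abs]
  gcongr
  · exact mul_le_of_le_one_left (norm_nonneg _) (Real.abs_sin_le_one θ)
  · exact mul_le_of_le_one_left (norm_nonneg _) (Real.abs_cos_le_one θ)

variable [MeasurableSpace E] [BorelSpace E] [SecondCountableTopology E] [CompleteSpace E]
  {μ : Measure E} [IsGaussian μ]

theorem integrable_add_norm_sq_of_isGaussian :
    Integrable (fun p : E × E => (‖p.1‖ + ‖p.2‖) ^ 2) (μ.prod μ) :=
  have h_norm : MemLp (fun x : E => ‖x‖) 2 μ := IsGaussian.memLp_two_id.norm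
  ((h_norm.comp_fst μ).add (h_norm.comp_snd μ)).integrable_sq

theorem integrable_sq_fderiv_rotation_of_isGaussian (hh : ContDiff ℝ 1 h) {C : ℝ}
    (hC : ∀ x, ‖fderiv ℝ h x‖ ≤ C) {ν : Measure ℝ} [IsFiniteMeasure ν] :
    Integrable (fun q : ℝ × (E × E) => (fderiv ℝ h (ContinuousLinearMap.rotation q.1 q.2).1
      (ContinuousLinearMap.rotation q.1 q.2).2) ^ 2) (ν.prod (μ.prod μ)) := by
  have h_cont : Continuous fun q : ℝ × (E × E) =>
      (fderiv ℝ h (ContinuousLinearMap.rotation q.1 q.2).1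
        (ContinuousLinearMap.rotation q.1 q.2).2) ^ 2 := by
    have := hh.continuous_fderiv one_ne_zero
    simp only [ContinuousLinearMap.rotation_apply]
    fun_prop
  refine ((integrable_add_norm_sq_of_isGaussian.const_mul (C ^ 2)).comp_snd ν).mono'
    h_cont.aestronglyMeasurable (ae_of_all _ fun q => ?_)
  rw [norm_pow, ← mul_pow]
  gcongr
  exact (ContinuousLinearMap.le_of_opNorm_le _ (hC _) _).trans
    (mul_le_mul_of_nonneg_left (norm_rotation_snd_le _ _) ((norm_nonneg _).trans (hC 0)))

theorem integral_prod_sub_sq_le_of_isGaussian (hμ : μ[id] = 0) (hh : ContDiff ℝ 1 h) {C : ℝ}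
    (hC : ∀ x, ‖fderiv ℝ h x‖ ≤ C) :
    ∫ p, (h p.2 - h p.1) ^ 2 ∂(μ.prod μ) ≤
      (Real.pi / 2) ^ 2 * ∫ p, (fderiv ℝ h p.1 p.2) ^ 2 ∂(μ.prod μ) := by
  have : IsFiniteMeasure (volume.restrict (Set.uIoc 0 (Real.pi / 2))) := ⟨by simp [Set.uIoc]⟩
  have h_int := integrable_sq_fderiv_rotation_of_isGaussian (μ := μ) hh hC
    (ν := volume.restrict (Set.uIoc 0 (Real.pi / 2)))
  have h_cont : Continuous fun p : E × E => (fderiv ℝ h p.1 p.2) ^ 2 := by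
    have := hh.continuous_fderiv one_ne_zero
    fun_prop
  calc ∫ p, (h p.2 - h p.1) ^ 2 ∂(μ.prod μ)
      ≤ ∫ p, (Real.pi / 2 * ∫ θ in (0 : ℝ)..(Real.pi / 2),
          (fderiv ℝ h (ContinuousLinearMap.rotation θ p).1
            (ContinuousLinearMap.rotation θ p).2) ^ 2) ∂(μ.prod μ) := by
        refine integral_mono_of_nonneg (ae_of_all _ fun _ => sq_nonneg _) ?_
          (ae_of_all _ (sub_sq_le_intervalIntegral_rotation hh))
        simp only [intervalIntegral.integral_of_le Real.pi_div_two_pos.le]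
        rw [Set.uIoc_of_le Real.pi_div_two_pos.le] at h_int
        exact h_int.integral_prod_right.const_mul _
    _ = Real.pi / 2 * ∫ θ in (0 : ℝ)..(Real.pi / 2), (∫ p,
          (fderiv ℝ h (ContinuousLinearMap.rotation θ p).1
            (ContinuousLinearMap.rotation θ p).2) ^ 2 ∂(μ.prod μ)) := by
        rw [integral_const_mul, intervalIntegral_integral_swap h_int]
    _ = Real.pi / 2 * ∫ θ in (0 : ℝ)..(Real.pi / 2), (∫ p,
          (fderiv ℝ h p.1 p.2) ^ 2 ∂(μ.prod μ)) := by
        congr with θ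
        conv_rhs => rw [← IsGaussian.map_rotation_eq_self hμ θ]
        rw [integral_map (by fun_prop) h_cont.aestronglyMeasurable]
    _ = (Real.pi / 2) ^ 2 * ∫ p, (fderiv ℝ h p.1 p.2) ^ 2 ∂(μ.prod μ) := by
        rw [intervalIntegral.integral_const, smul_eq_mul]
        ring

end Rotation

theorem integral_prod_sub_sq {Ω : Type*} [MeasurableSpace Ω] {μ : Measure Ω}
    [IsProbabilityMeasure μ] {X : Ω → ℝ} (hX : MemLp X 2 μ) :
    ∫ p, (X p.2 - X p.1) ^ 2 ∂(μ.prod μ) = 2 * Var[X; μ] := by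
  have h_var := variance_add_prod hX.neg hX
  have h_mean : ∫ p, ((-X) p.1 + X p.2) ∂(μ.prod μ) = 0 := by
    rw [integral_add ((hX.neg.integrable one_le_two).comp_fst μ)
      ((hX.integrable one_le_two).comp_snd μ), integral_fun_fst, integral_fun_snd]
    simp [integral_neg]
  have h_meas : AEMeasurable (fun p => (-X) p.1 + X p.2) (μ.prod μ) :=
    ((hX.neg.comp_fst μ).add (hX.comp_snd μ)).aemeasurable
  rw [variance_of_integral_eq_zero h_meas h_mean, variance_neg] at h_var
  rw [two_mul, ← h_var]
  congr with p
  simp [sub_eq_neg_add]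

theorem variance_le_integral_variance_fderiv_of_isGaussian [NormedSpace ℝ E] [MeasurableSpace E]
    [BorelSpace E] [SecondCountableTopology E] [CompleteSpace E] {μ : Measure E} [IsGaussian μ]
    (hμ : μ[id] = 0) {h : E → ℝ} (hh : ContDiff ℝ 1 h) {C : ℝ} (hC : ∀ x, ‖fderiv ℝ h x‖ ≤ C) :
    Var[h; μ] ≤ Real.pi ^ 2 / 8 * ∫ x, Var[fderiv ℝ h x; μ] ∂μ := by
  have h_memLp : MemLp h 2 μ := by
    have h_lip : LipschitzWith C.toNNReal h :=
      lipschitzWith_of_nnnorm_fderiv_le (hh.differentiable one_ne_zero)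
        fun x => NNReal.le_toNNReal_of_coe_le (hC x)
    have h_sub : MemLp (fun x => h x - h 0) 2 μ :=
      (h_lip.sub (LipschitzWith.const (h 0))).comp_memLp (sub_self _) IsGaussian.memLp_two_id
    exact (h_sub.add (memLp_const (h 0))).ae_eq (ae_of_all _ fun x => sub_add_cancel (h x) (h 0))
  have h_int : Integrable (fun p : E × E => (fderiv ℝ h p.1 p.2) ^ 2) (μ.prod μ) := by
    have := hh.continuous_fderiv one_ne_zero
    refine (integrable_add_norm_sq_of_isGaussian.const_mul (C ^ 2)).mono'
      (Continuous.aestronglyMeasurable (by fun_prop)) (ae_of_all _ fun p => ?_)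
    rw [norm_pow, ← mul_pow]
    gcongr
    refine (ContinuousLinearMap.le_of_opNorm_le _ (hC _) _).trans ?_
    exact mul_le_mul_of_nonneg_left (le_add_of_nonneg_left (norm_nonneg _))
      ((norm_nonneg _).trans (hC 0))
  have h_fderiv (x : E) : ∫ y, fderiv ℝ h x y ^ 2 ∂μ = Var[fderiv ℝ h x; μ] := by
    refine (variance_of_integral_eq_zero (by fun_prop) ?_).symm
    rw [IsGaussian.integral_dual]
    exact (congrArg (fderiv ℝ h x) hμ).trans (map_zero _)
  have h_le := integral_prod_sub_sq_le_of_isGaussian hμ hh hC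
  rw [integral_prod_sub_sq h_memLp, integral_prod _ h_int] at h_le
  simp only [h_fderiv] at h_le
  linarith

section WeightedPoincare

variable [InnerProductSpace ℝ E] [FiniteDimensional ℝ E] [MeasurableSpace E] [BorelSpace E]

theorem integrable_exp_neg_mul_sq_norm {b : ℝ} (hb : 0 < b) :
    Integrable (fun x : E => Real.exp (-b * ‖x‖ ^ 2)) := by
  refine (GaussianFourier.integrable_cexp_neg_mul_sq_norm_add (V := E) (b := (b : ℂ))
    (by simpa using hb) 0 0).re.congr (ae_of_all _ fun x => ?_)
  simp only [zero_mul, add_zero]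
  norm_cast

theorem integrable_exp_neg_sq_norm : Integrable (fun x : E => Real.exp (-‖x‖ ^ 2)) := by
  simpa using integrable_exp_neg_mul_sq_norm (E := E) one_pos

theorem map_smul_stdGaussian_eq_tilted :
    (stdGaussian E).map ((√2)⁻¹ • ·) = volume.tilted fun x => -‖x‖ ^ 2 := by
  have := isProbabilityMeasure_tilted (μ := (volume : Measure E)) integrable_exp_neg_sq_norm
  have h_Z : (((∫ x : E, Real.exp (-‖x‖ ^ 2) : ℝ)) : ℂ) =
      (Real.pi : ℂ) ^ (Module.finrank ℝ E / 2 : ℂ) := by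
    rw [← integral_complex_ofReal]
    simpa using GaussianFourier.integral_cexp_neg_mul_sq_norm (V := E) (b := 1) (by simp)
  have h_Z0 : (((∫ x : E, Real.exp (-‖x‖ ^ 2) : ℝ)) : ℂ) ≠ 0 :=
    Complex.ofReal_ne_zero.2 (integral_exp_pos integrable_exp_neg_sq_norm).ne'
  have := Measure.isProbabilityMeasure_map (μ := stdGaussian E)
    (f := fun x => (√2)⁻¹ • x) (by fun_prop)
  refine Measure.ext_of_charFun (funext fun t => ?_)
  rw [charFun_map_smul, charFun_stdGaussian, charFun_apply, integral_tilted]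
  have h_integrand (x : E) : (Real.exp (-‖x‖ ^ 2) / ∫ y : E, Real.exp (-‖y‖ ^ 2)) •
      Complex.exp (⟪x, t⟫ * Complex.I) = (∫ y : E, Real.exp (-‖y‖ ^ 2) : ℝ)⁻¹ *
        Complex.exp (-1 * ‖x‖ ^ 2 + Complex.I * ⟪t, x⟫) := by
    rw [Complex.real_smul, Complex.exp_add, real_inner_comm]
    push_cast
    ring_nf
  simp only [h_integrand]
  rw [integral_const_mul, GaussianFourier.integral_cexp_neg_mul_sq_norm_add (by simp), div_one,
    ← h_Z, ← mul_assoc]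
  push_cast
  rw [inv_mul_cancel₀ h_Z0]
  have h_norm : ‖(√2)⁻¹ • t‖ ^ 2 / 2 = ‖t‖ ^ 2 / 4 := by
    rw [norm_smul, mul_pow, norm_inv, inv_pow, Real.norm_eq_abs, sq_abs, Real.sq_sqrt zero_le_two]
    ring
  rw [neg_div, show ((‖(√2)⁻¹ • t‖ : ℂ) ^ 2 / 2) = ‖t‖ ^ 2 / 4 by exact_mod_cast h_norm,
    Complex.I_sq]
  ring_nf

theorem isGaussian_tilted_neg_sq_norm :
    IsGaussian (volume.tilted fun x : E => -‖x‖ ^ 2) := by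
  rw [← map_smul_stdGaussian_eq_tilted]
  exact isGaussian_map_of_measurable (L := (√2)⁻¹ • ContinuousLinearMap.id ℝ E) (by fun_prop)

theorem integral_id_tilted_neg_sq_norm : (volume.tilted fun x : E => -‖x‖ ^ 2)[id] = 0 := by
  rw [← map_smul_stdGaussian_eq_tilted, integral_map (by fun_prop) (by fun_prop)]
  simp only [id_eq]
  rw [integral_smul, integral_id_stdGaussian, smul_zero]

theorem variance_dual_tilted_neg_sq_norm (L : StrongDual ℝ E) :
    Var[L; volume.tilted fun x : E => -‖x‖ ^ 2] = ‖L‖ ^ 2 / 2 := by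
  have h_comp : ⇑L ∘ ((√2)⁻¹ • ·) = (√2)⁻¹ • ⇑L := by
    ext x
    simp
  rw [← map_smul_stdGaussian_eq_tilted, variance_map (by fun_prop) (by fun_prop), h_comp,
    variance_smul, variance_dual_stdGaussian, inv_pow, Real.sq_sqrt zero_le_two]
  ring

theorem integral_exp_neg_sq_norm_mul_sq_le {h : E → ℝ} (hh : ContDiff ℝ 1 h) {C : ℝ}
    (hC : ∀ x, ‖fderiv ℝ h x‖ ≤ C) (h0 : ∫ x, Real.exp (-‖x‖ ^ 2) * h x = 0) :
    ∫ x, Real.exp (-‖x‖ ^ 2) * h x ^ 2 ≤ ∫ x, Real.exp (-‖x‖ ^ 2) * ‖fderiv ℝ h x‖ ^ 2 := by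
  have := isGaussian_tilted_neg_sq_norm (E := E)
  have h_Z : 0 < ∫ x : E, Real.exp (-‖x‖ ^ 2) := integral_exp_pos integrable_exp_neg_sq_norm
  have h_tilted (g : E → ℝ) : ∫ x, g x ∂(volume.tilted fun x : E => -‖x‖ ^ 2) =
      (∫ x, Real.exp (-‖x‖ ^ 2) * g x) / ∫ x : E, Real.exp (-‖x‖ ^ 2) := by
    rw [integral_tilted, ← integral_div]
    simp only [smul_eq_mul, div_mul_eq_mul_div]
  have h_poincare := variance_le_integral_variance_fderiv_of_isGaussian
    integral_id_tilted_neg_sq_norm hh hC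
  rw [variance_of_integral_eq_zero hh.continuous.measurable.aemeasurable (by simp [h_tilted, h0])]
    at h_poincare
  simp only [variance_dual_tilted_neg_sq_norm, h_tilted, ← mul_div_assoc, integral_div]
    at h_poincare
  rw [div_le_div_iff_of_pos_right h_Z] at h_poincare
  have h_grad : 0 ≤ ∫ x, Real.exp (-‖x‖ ^ 2) * ‖fderiv ℝ h x‖ ^ 2 :=
    integral_nonneg fun x => by positivity
  have h_pi : Real.pi ^ 2 / 8 / 2 ≤ 1 := by nlinarith [Real.pi_le_four, Real.pi_pos]
  linarith [mul_le_mul_of_nonneg_right h_pi h_grad]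

end WeightedPoincare

end Poincare

section Calculus

variable {F : Type*} [NormedAddCommGroup F]

section PartialDeriv

variable [NormedSpace ℝ F] {f : Ed d → F}

/-- The partial derivative `∂_j f`. -/
def partialDeriv (j : Fin d) (f : Ed d → F) (x : Ed d) : F :=
  fderiv ℝ f x (EuclideanSpace.single j 1)

/-- The annihilation operator `∂_j + x^j` of the harmonic oscillator, in the normalisation in which
its adjoint is `-∂_j + x^j`. -/
def annihilation (j : Fin d) (f : Ed d → F) (x : Ed d) : F :=
  partialDeriv j f x + x j • f x

theorem contDiff_partialDeriv {m n : WithTop ℕ∞} (hf : ContDiff ℝ n f) (hmn : m + 1 ≤ n)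
    (j : Fin d) : ContDiff ℝ m (partialDeriv j f) :=
  (hf.fderiv_right hmn).clm_apply contDiff_const

theorem continuous_partialDeriv (hf : ContDiff ℝ 1 f) (j : Fin d) :
    Continuous (partialDeriv j f) :=
  (contDiff_partialDeriv (m := 0) hf (by norm_num) j).continuous

theorem continuous_annihilation (hf : ContDiff ℝ 1 f) (j : Fin d) :
    Continuous (annihilation j f) :=
  (continuous_partialDeriv hf j).add (.smul (by fun_prop) hf.continuous)

theorem partialDeriv_of_notMem_tsupport {x : Ed d} (hx : x ∉ tsupport f) (j : Fin d) :
    partialDeriv j f x = 0 := by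
  simp [partialDeriv, fderiv_of_notMem_tsupport (𝕜 := ℝ) hx]

theorem annihilation_of_notMem_tsupport {x : Ed d} (hx : x ∉ tsupport f) (j : Fin d) :
    annihilation j f x = 0 := by
  simp [annihilation, partialDeriv_of_notMem_tsupport hx, image_eq_zero_of_notMem_tsupport hx]

theorem partialDeriv_clm_comp {G : Type*} [NormedAddCommGroup G] [NormedSpace ℝ G] (T : F →L[ℝ] G)
    {x : Ed d} (hf : DifferentiableAt ℝ f x) (j : Fin d) :
    partialDeriv j (fun y => T (f y)) x = T (partialDeriv j f x) :=
  congrArg (· (EuclideanSpace.single j 1)) (T.hasFDerivAt.comp x hf.hasFDerivAt).fderiv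

theorem annihilation_clm_comp {G : Type*} [NormedAddCommGroup G] [NormedSpace ℝ G] (T : F →L[ℝ] G)
    {x : Ed d} (hf : DifferentiableAt ℝ f x) (j : Fin d) :
    annihilation j (fun y => T (f y)) x = T (annihilation j f x) := by
  simp only [annihilation, partialDeriv_clm_comp T hf, map_add, map_smul]

theorem partialDeriv_smul {g : Ed d → ℝ} {x : Ed d} (hg : DifferentiableAt ℝ g x)
    (hf : DifferentiableAt ℝ f x) (j : Fin d) :
    partialDeriv j (fun y => g y • f y) x =
      g x • partialDeriv j f x + partialDeriv j g x • f x := by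
  simp [partialDeriv, fderiv_fun_smul hg hf]

theorem partialDeriv_coord (i j : Fin d) (x : Ed d) :
    partialDeriv i (fun y : Ed d => y j) x = if i = j then 1 else 0 := by
  refine (congrArg (· (EuclideanSpace.single i 1))
    (EuclideanSpace.proj (𝕜 := ℝ) j).hasFDerivAt.fderiv).trans ?_
  simp [eq_comm]

theorem partialDeriv_comm (hf : ContDiff ℝ 2 f) (i j : Fin d) (x : Ed d) :
    partialDeriv i (partialDeriv j f) x = partialDeriv j (partialDeriv i f) x := by
  have h_diff : DifferentiableAt ℝ (fderiv ℝ f) x :=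
    (hf.fderiv_right (m := 1) (by norm_num)).differentiable one_ne_zero x
  have h_eq (k l : Fin d) : partialDeriv k (partialDeriv l f) x = fderiv ℝ (fderiv ℝ f) x
      (EuclideanSpace.single k 1) (EuclideanSpace.single l 1) := by
    change fderiv ℝ (fun y => fderiv ℝ f y (EuclideanSpace.single l 1)) x _ = _
    simp [fderiv_clm_apply h_diff (differentiableAt_const _)]
  rw [h_eq, h_eq]
  exact (hf.contDiffAt.isSymmSndFDerivAt (by simp)) _ _

end PartialDeriv

section Integrability

variable {f : Ed d → F}

theorem integrable_of_forall_notMem_tsupport_eq_zero (hc : HasCompactSupport f) {q : Ed d → ℝ}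
    (hq : Continuous q) (h0 : ∀ x ∉ tsupport f, q x = 0) : Integrable q :=
  hq.integrable_of_hasCompactSupport (.intro hc h0)

variable {G : Type*} [NormedAddCommGroup G] {a b : Ed d → G}

theorem integrable_inner_of_forall_notMem_tsupport_eq_zero [InnerProductSpace ℝ G]
    (hc : HasCompactSupport f) (ha : Continuous a) (hb : Continuous b)
    (h0 : ∀ x ∉ tsupport f, b x = 0) : Integrable fun x => ⟪a x, b x⟫ :=
  integrable_of_forall_notMem_tsupport_eq_zero hc (ha.inner hb) fun x hx => by
    rw [h0 x hx, inner_zero_right]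

theorem integrable_norm_sq_of_forall_notMem_tsupport_eq_zero (hc : HasCompactSupport f)
    (hb : Continuous b) (h0 : ∀ x ∉ tsupport f, b x = 0) : Integrable fun x => ‖b x‖ ^ 2 :=
  integrable_of_forall_notMem_tsupport_eq_zero hc (hb.norm.pow 2) fun x hx => by simp [h0 x hx]

end Integrability

section IntegrationByParts

variable [InnerProductSpace ℝ F] {f g : Ed d → F}

theorem integral_inner_partialDeriv (hf : ContDiff ℝ 1 f) (hg : ContDiff ℝ 1 g)
    (hc : HasCompactSupport g) (j : Fin d) :
    ∫ x, ⟪f x, partialDeriv j g x⟫ = -∫ x, ⟪partialDeriv j f x, g x⟫ :=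
  have hg0 : ∀ x ∉ tsupport g, g x = 0 := fun _ hx => image_eq_zero_of_notMem_tsupport hx
  integral_bilinear_fderiv_right_eq_neg_left_of_integrable (B := innerSL ℝ)
    (integrable_inner_of_forall_notMem_tsupport_eq_zero hc (continuous_partialDeriv hf j)
      hg.continuous hg0)
    (integrable_inner_of_forall_notMem_tsupport_eq_zero hc hf.continuous
      (continuous_partialDeriv hg j) fun _ hx => partialDeriv_of_notMem_tsupport hx j)
    (integrable_inner_of_forall_notMem_tsupport_eq_zero hc hf.continuous hg.continuous hg0)
    (fun x _ => hf.differentiable one_ne_zero x) (fun x _ => hg.differentiable one_ne_zero x)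

theorem integral_inner_partialDeriv_partialDeriv_comm (hf : ContDiff ℝ 2 f) (hg : ContDiff ℝ 2 g)
    (hc : HasCompactSupport g) (i j : Fin d) :
    ∫ x, ⟪partialDeriv i f x, partialDeriv j g x⟫ =
      ∫ x, ⟪partialDeriv j f x, partialDeriv i g x⟫ := by
  have hg1 : ContDiff ℝ 1 g := hg.of_le one_le_two
  rw [integral_inner_partialDeriv (contDiff_partialDeriv hf (by norm_num) i) hg1 hc,
    integral_inner_partialDeriv (contDiff_partialDeriv hf (by norm_num) j) hg1 hc]
  simp only [partialDeriv_comm hf j i]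

theorem two_mul_integral_coord_mul_inner_partialDeriv (hf : ContDiff ℝ 1 f)
    (hc : HasCompactSupport f) {T : F →L[ℝ] F} (hT : ∀ x y, ⟪T x, y⟫ = ⟪x, T y⟫) (i j : Fin d) :
    2 * ∫ x, x j * ⟪partialDeriv i f x, T (f x)⟫ =
      if i = j then -∫ x, ⟪f x, T (f x)⟫ else 0 := by
  have h_diff : Differentiable ℝ f := hf.differentiable one_ne_zero
  have hTf := T.continuous.comp hf.continuous
  have h_coord (x : Ed d) : partialDeriv i (fun y => y j • f y) x =
      x j • partialDeriv i f x + (if i = j then (1 : ℝ) else 0) • f x := by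
    rw [partialDeriv_smul (by fun_prop) (h_diff x), partialDeriv_coord]
  have h_symm (x : Ed d) : ⟪x j • f x, T (partialDeriv i f x)⟫ =
      x j * ⟪partialDeriv i f x, T (f x)⟫ := by
    rw [real_inner_smul_left, ← hT, real_inner_comm]
  have h_ibp := integral_inner_partialDeriv (f := fun x : Ed d => x j • f x)
    (g := fun x => T (f x)) (.smul (by fun_prop) hf) (T.contDiff.comp hf)
    (hc.comp_left (map_zero T)) i
  simp only [partialDeriv_clm_comp T (h_diff _), h_symm, h_coord, inner_add_left,
    real_inner_smul_left] at h_ibp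
  rw [integral_add, integral_const_mul] at h_ibp
  · split_ifs at h_ibp ⊢ <;> linarith
  · exact integrable_of_forall_notMem_tsupport_eq_zero hc
      (.mul (by fun_prop) ((continuous_partialDeriv hf i).inner hTf))
      fun x hx => by simp [image_eq_zero_of_notMem_tsupport hx]
  · exact integrable_of_forall_notMem_tsupport_eq_zero hc
      (.mul continuous_const (hf.continuous.inner hTf))
      fun x hx => by simp [image_eq_zero_of_notMem_tsupport hx]

end IntegrationByParts

end Calculus

section Clifford

/-- The Hurwitz–Radon relations `c_i^* c_j + c_j^* c_i = 2 δ_ij`, written without adjoints. They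
hold for skew-adjoint Clifford generators of square `-1` and for self-adjoint ones of square `1`. -/
def IsHurwitzRadon (c : Fin d → S →L[ℝ] S) : Prop :=
  ∀ i j x y, ⟪c i x, c j y⟫ + ⟪c j x, c i y⟫ = if i = j then 2 * ⟪x, y⟫ else 0

namespace IsHurwitzRadon

variable {c : Fin d → S →L[ℝ] S}

theorem inner_apply_apply_self (hc : IsHurwitzRadon c) (i j : Fin d) (v : S) :
    ⟪c i v, c j v⟫ = if i = j then ‖v‖ ^ 2 else 0 := by
  have h := hc i j v v
  rw [real_inner_comm (c i v), real_inner_self_eq_norm_sq] at h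
  split_ifs at h ⊢ <;> linarith

theorem norm_sq_sum_smul (hc : IsHurwitzRadon c) (a : Fin d → ℝ) (v : S) :
    ‖∑ j, a j • c j v‖ ^ 2 = (∑ j, a j ^ 2) * ‖v‖ ^ 2 := by
  simp only [← real_inner_self_eq_norm_sq, sum_inner, inner_sum, real_inner_smul_left,
    real_inner_smul_right, hc.inner_apply_apply_self]
  simp [Finset.sum_mul, sq, mul_assoc]

end IsHurwitzRadon

/-- The representation of the Clifford algebra of signature `(d, d)` underlying the Bott–Dirac
operator: skew-adjoint generators `e_i` of square `-1` and self-adjoint generators `ε_i` of square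
`1`, all of them anticommuting. -/
structure IsCliffordPair (e ε : Fin d → S →L[ℝ] S) : Prop where
  fst_anticomm : ∀ i j x, e i (e j x) + e j (e i x) = if i = j then (-2 : ℝ) • x else 0
  snd_anticomm : ∀ i j x, ε i (ε j x) + ε j (ε i x) = if i = j then (2 : ℝ) • x else 0
  anticomm : ∀ i j x, e i (ε j x) + ε j (e i x) = 0
  fst_skew : ∀ i x y, ⟪e i x, y⟫ = -⟪x, e i y⟫
  snd_symm : ∀ i x y, ⟪ε i x, y⟫ = ⟪x, ε i y⟫

namespace IsCliffordPair

variable {e ε : Fin d → S →L[ℝ] S}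

theorem isHurwitzRadon_fst (h : IsCliffordPair e ε) : IsHurwitzRadon e := fun i j x y => by
  rw [h.fst_skew, h.fst_skew, ← neg_add, ← inner_add_right, h.fst_anticomm]
  split_ifs <;> simp [real_inner_smul_right]

theorem isHurwitzRadon_snd (h : IsCliffordPair e ε) : IsHurwitzRadon ε := fun i j x y => by
  rw [h.snd_symm, h.snd_symm, ← inner_add_right, h.snd_anticomm]
  split_ifs <;> simp [real_inner_smul_right]

theorem snd_fst_apply (h : IsCliffordPair e ε) (i j : Fin d) (x : S) :
    ε j (e i x) = -e i (ε j x) :=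
  eq_neg_of_add_eq_zero_right (h.anticomm i j x)

theorem fst_snd_symm (h : IsCliffordPair e ε) (i j : Fin d) (x y : S) :
    ⟪e i (ε j x), y⟫ = ⟪x, e i (ε j y)⟫ := by
  rw [h.fst_skew, h.snd_symm, h.snd_fst_apply, inner_neg_right, neg_neg]

theorem norm_fst_apply (h : IsCliffordPair e ε) (i : Fin d) (x : S) : ‖e i x‖ = ‖x‖ := by
  have h_sq := h.isHurwitzRadon_fst.inner_apply_apply_self i i x
  rw [real_inner_self_eq_norm_sq, if_pos rfl] at h_sq
  exact (sq_eq_sq₀ (norm_nonneg _) (norm_nonneg _)).1 h_sq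

theorem fst_snd_fst_apply (h : IsCliffordPair e ε) (j k : Fin d) (x : S) :
    e j (ε j (e k x)) = if j = k then -e k (e j (ε j x)) else e k (e j (ε j x)) := by
  rw [h.snd_fst_apply, map_neg]
  split_ifs with hjk
  · rw [hjk]
  · have h_anti := h.fst_anticomm j k (ε j x)
    rw [if_neg hjk] at h_anti
    rw [eq_neg_of_add_eq_zero_left h_anti, neg_neg]

variable {u : S}

theorem fst_snd_apply_vacuum (h : IsCliffordPair e ε) (hvac : ∀ j, e j u = ε j u) (j : Fin d) :
    e j (ε j u) = -u := by
  have h_sq := h.fst_anticomm j j u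
  rw [if_pos rfl, ← two_smul ℝ, neg_smul, ← smul_neg] at h_sq
  rw [← hvac]
  exact smul_right_injective S (two_ne_zero (α := ℝ)) h_sq

/-- The witness is `e_{k₁} ⋯ e_{kₘ} u` for `s = {k₁, …, kₘ}`, the state with `s` as its set of
occupied modes. -/
theorem exists_number_eigenvector (h : IsCliffordPair e ε) (hvac : ∀ j, e j u = ε j u)
    (s : Finset (Fin d)) :
    ∃ w : S, ‖w‖ = ‖u‖ ∧ (s = ∅ → w = u) ∧
      ∀ j, e j (ε j w) = (if j ∈ s then (1 : ℝ) else -1) • w := by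
  induction s using Finset.induction_on with
  | empty => exact ⟨u, rfl, fun _ => rfl, fun j => by simp [h.fst_snd_apply_vacuum hvac]⟩
  | insert k s hk ih =>
    obtain ⟨w, hw, -, hN⟩ := ih
    refine ⟨e k w, by rw [h.norm_fst_apply, hw],
      fun hs => absurd hs (Finset.insert_ne_empty k s), fun j => ?_⟩
    rw [h.fst_snd_fst_apply, hN]
    rcases eq_or_ne j k with rfl | hjk
    · simp [hk]
    · rw [if_neg hjk, map_smul]
      simp only [Finset.mem_insert, hjk, false_or]

theorem exists_orthonormalBasis_number (h : IsCliffordPair e ε)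
    (hdim : Module.finrank ℝ S = 2 ^ d) (hu : u ≠ 0) (hvac : ∀ j, e j u = ε j u) :
    ∃ b : OrthonormalBasis (Finset (Fin d)) ℝ S, b ∅ = ‖u‖⁻¹ • u ∧
      ∀ j s, e j (ε j (b s)) = (if j ∈ s then (1 : ℝ) else -1) • b s := by
  have : FiniteDimensional ℝ S := Module.finite_of_finrank_pos (by rw [hdim]; positivity)
  choose w hw hw_empty hN using h.exists_number_eigenvector hvac
  have h_orth {s t : Finset (Fin d)} (hst : s ≠ t) : ⟪w s, w t⟫ = 0 := by
    obtain ⟨j, hj⟩ : ∃ j, ¬(j ∈ s ↔ j ∈ t) := by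
      by_contra! h_eq
      exact hst (Finset.ext h_eq)
    have h_symm := h.fst_snd_symm j j (w s) (w t)
    rw [hN, hN, real_inner_smul_left, real_inner_smul_right] at h_symm
    split_ifs at h_symm <;> first | tauto | linarith
  have h_on : Orthonormal ℝ fun s => ‖u‖⁻¹ • w s := by
    refine ⟨fun s => ?_, fun s t hst => ?_⟩
    · rw [norm_smul, hw, norm_inv, norm_norm, inv_mul_cancel₀ (norm_ne_zero_iff.2 hu)]
    · simp [real_inner_smul_left, real_inner_smul_right, h_orth hst]
  have h_card : Fintype.card (Finset (Fin d)) = Module.finrank ℝ S := by simp [hdim]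
  have h_coe := coe_basisOfOrthonormalOfCardEqFinrank h_on h_card
  let b := (basisOfOrthonormalOfCardEqFinrank h_on h_card).toOrthonormalBasis (by rwa [h_coe])
  have hb (s : Finset (Fin d)) : b s = ‖u‖⁻¹ • w s := by simp [b, h_coe]
  refine ⟨b, by rw [hb, hw_empty ∅ rfl], fun j s => ?_⟩
  rw [hb, map_smul, map_smul, hN, smul_comm]

end IsCliffordPair

theorem inner_apply_eq_sum_of_apply_eq_smul {V κ : Type*} [NormedAddCommGroup V]
    [InnerProductSpace ℝ V] [Fintype κ] (b : OrthonormalBasis κ ℝ V) {T : V →L[ℝ] V} {a : κ → ℝ}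
    (hT : ∀ k, T (b k) = a k • b k) (v : V) :
    ⟪v, T v⟫ = ∑ k, a k * ⟪b k, v⟫ ^ 2 := by
  have h_apply : T v = ∑ k, (⟪b k, v⟫ * a k) • b k := by
    conv_lhs => rw [← b.sum_repr' v]
    simp only [map_sum, map_smul, hT, smul_smul]
  rw [h_apply, inner_sum]
  refine Finset.sum_congr rfl fun k _ => ?_
  rw [real_inner_smul_right, real_inner_comm]
  ring

/-- `d + ν` is twice the number operator, whose kernel is spanned by the vacuum and whose other
eigenvalues are at least `1`. -/
theorem IsCliffordPair.norm_sq_sub_le {e ε : Fin d → S →L[ℝ] S} (h : IsCliffordPair e ε)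
    (hdim : Module.finrank ℝ S = 2 ^ d) {u : S} (hu : u ≠ 0) (hvac : ∀ j, e j u = ε j u) (v : S) :
    ‖v‖ ^ 2 - ⟪u, v⟫ ^ 2 / ‖u‖ ^ 2 ≤ d * ‖v‖ ^ 2 + ⟪v, nuOp e ε v⟫ := by
  obtain ⟨b, hb_empty, hb⟩ := h.exists_orthonormalBasis_number hdim hu hvac
  have h_nu (s : Finset (Fin d)) : nuOp e ε (b s) = (2 * s.card - d : ℝ) • b s := by
    have h_sum : ∑ j, (if j ∈ s then (1 : ℝ) else -1) = 2 * s.card - d := by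
      calc ∑ j, (if j ∈ s then (1 : ℝ) else -1) = ∑ j, ((if j ∈ s then (2 : ℝ) else 0) - 1) :=
            Finset.sum_congr rfl fun j _ => by split_ifs <;> norm_num
        _ = 2 * s.card - d := by simp [mul_comm]
    simp only [nuOp, sum_apply, ContinuousLinearMap.comp_apply, hb]
    rw [← Finset.sum_smul, h_sum]
  have h_norm : ‖v‖ ^ 2 = ∑ s, ⟪b s, v⟫ ^ 2 := by simpa using (b.sum_sq_norm_inner_right v).symm
  have h_vacuum : ⟪u, v⟫ ^ 2 / ‖u‖ ^ 2 = ∑ s, if s = ∅ then ⟪b s, v⟫ ^ 2 else 0 := by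
    rw [Finset.sum_ite_eq' Finset.univ ∅ fun s => ⟪b s, v⟫ ^ 2, if_pos (Finset.mem_univ _),
      hb_empty, real_inner_smul_left]
    ring
  rw [inner_apply_eq_sum_of_apply_eq_smul b h_nu, h_norm, h_vacuum, Finset.mul_sum,
    ← Finset.sum_sub_distrib, ← Finset.sum_add_distrib]
  refine Finset.sum_le_sum fun s _ => ?_
  split_ifs with hs
  · simp [hs]
  · have h_card : (1 : ℝ) ≤ s.card := by
      exact_mod_cast Finset.card_pos.2 (Finset.nonempty_iff_ne_empty.2 hs)
    nlinarith [sq_nonneg ⟪b s, v⟫]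

end Clifford

section Energy

variable {e ε : Fin d → S →L[ℝ] S} {f : Ed d → S}

theorem Dop_apply (x : Ed d) : Dop e f x = ∑ j, e j (partialDeriv j f x) := rfl

theorem continuous_Dop (hf : ContDiff ℝ 1 f) : Continuous (Dop e f) :=
  continuous_finsetSum _ fun j _ => (e j).continuous.comp (continuous_partialDeriv hf j)

theorem continuous_Fop (hf : Continuous f) : Continuous (Fop ε f) := by
  unfold Fop
  fun_prop

theorem Dop_of_notMem_tsupport {x : Ed d} (hx : x ∉ tsupport f) : Dop e f x = 0 := by
  simp [Dop_apply, partialDeriv_of_notMem_tsupport hx]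

theorem Fop_of_notMem_tsupport {x : Ed d} (hx : x ∉ tsupport f) : Fop ε f x = 0 := by
  simp [Fop, image_eq_zero_of_notMem_tsupport hx]

theorem integral_norm_sq_Dop (he : IsHurwitzRadon e) (hf : ContDiff ℝ 2 f)
    (hc : HasCompactSupport f) :
    ∫ x, ‖Dop e f x‖ ^ 2 = ∑ j, ∫ x, ‖partialDeriv j f x‖ ^ 2 := by
  have hf1 : ContDiff ℝ 1 f := hf.of_le one_le_two
  have h_int (i j k l : Fin d) :
      Integrable fun x => ⟪e i (partialDeriv k f x), e j (partialDeriv l f x)⟫ :=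
    integrable_inner_of_forall_notMem_tsupport_eq_zero hc
      ((e i).continuous.comp (continuous_partialDeriv hf1 k))
      ((e j).continuous.comp (continuous_partialDeriv hf1 l))
      fun x hx => by rw [partialDeriv_of_notMem_tsupport hx, map_zero]
  have h_swap (i j : Fin d) : ∫ x, ⟪e i (partialDeriv i f x), e j (partialDeriv j f x)⟫ =
      ∫ x, ⟪e j (partialDeriv i f x), e i (partialDeriv j f x)⟫ := by
    have h := integral_inner_partialDeriv_partialDeriv_comm ((e i).contDiff.comp hf)
      ((e j).contDiff.comp hf) (hc.comp_left (map_zero (e j))) i j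
    simpa only [Function.comp_def, partialDeriv_clm_comp _ (hf1.differentiable one_ne_zero _),
      real_inner_comm (e j (partialDeriv i f _))] using h
  have h_diag (i j : Fin d) : ∫ x, ⟪e i (partialDeriv i f x), e j (partialDeriv j f x)⟫ =
      if i = j then ∫ x, ‖partialDeriv i f x‖ ^ 2 else 0 := by
    have h := integral_add (h_int i j i j) (h_int j i i j)
    simp only [he i j, ← h_swap] at h
    split_ifs at h ⊢ with hij
    · rw [← hij] at h ⊢
      simp only [real_inner_self_eq_norm_sq, integral_const_mul] at h ⊢
      linarith
    · rw [integral_zero] at h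
      linarith
  simp only [Dop_apply, ← real_inner_self_eq_norm_sq (∑ _, _), sum_inner, inner_sum]
  rw [integral_finsetSum _ fun j _ => integrable_finsetSum _ fun i _ => h_int i j i j]
  refine Finset.sum_congr rfl fun j _ => ?_
  rw [integral_finsetSum _ fun i _ => h_int i j i j]
  simp [h_diag]

theorem norm_sq_Fop (hε : IsHurwitzRadon ε) (f : Ed d → S) (x : Ed d) :
    ‖Fop ε f x‖ ^ 2 = ‖x‖ ^ 2 * ‖f x‖ ^ 2 := by
  rw [EuclideanSpace.real_norm_sq_eq]
  exact hε.norm_sq_sum_smul (fun j => x j) (f x)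

theorem two_mul_integral_inner_Dop_Fop (h : IsCliffordPair e ε) (hf : ContDiff ℝ 1 f)
    (hc : HasCompactSupport f) :
    2 * ∫ x, ⟪Dop e f x, Fop ε f x⟫ = ∫ x, ⟪f x, nuOp e ε (f x)⟫ := by
  have hf0 {x : Ed d} (hx : x ∉ tsupport f) : f x = 0 := image_eq_zero_of_notMem_tsupport hx
  have h_int (i j : Fin d) :
      Integrable fun x => x j * ⟪partialDeriv i f x, ((e i).comp (ε j)) (f x)⟫ :=
    integrable_of_forall_notMem_tsupport_eq_zero hc (.mul (by fun_prop)
      ((continuous_partialDeriv hf i).inner (((e i).comp (ε j)).continuous.comp hf.continuous)))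
      fun x hx => by simp [hf0 hx]
  have h_int' (i : Fin d) : Integrable fun x => ⟪f x, ((e i).comp (ε i)) (f x)⟫ :=
    integrable_inner_of_forall_notMem_tsupport_eq_zero hc hf.continuous
      (((e i).comp (ε i)).continuous.comp hf.continuous) fun x hx => by rw [hf0 hx, map_zero]
  have h_inner (x : Ed d) : ⟪Dop e f x, Fop ε f x⟫ =
      -∑ i, ∑ j, x j * ⟪partialDeriv i f x, ((e i).comp (ε j)) (f x)⟫ := by
    simp only [Dop_apply, Fop, sum_inner, inner_sum, h.fst_skew, map_smul, real_inner_smul_right,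
      Finset.sum_neg_distrib, ContinuousLinearMap.comp_apply]
    rw [Finset.sum_comm]
  simp only [h_inner, integral_neg, nuOp, sum_apply, inner_sum]
  rw [integral_finsetSum _ fun i _ => integrable_finsetSum _ fun j _ => h_int i j,
    integral_finsetSum _ fun i _ => h_int' i, ← Finset.sum_neg_distrib, Finset.mul_sum]
  refine Finset.sum_congr rfl fun i _ => ?_
  rw [integral_finsetSum _ fun j _ => h_int i j, mul_neg, Finset.mul_sum]
  simp only [two_mul_integral_coord_mul_inner_partialDeriv hf hc
    (T := (e i).comp (ε _)) (h.fst_snd_symm i _)]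
  simp

theorem integral_norm_sq_annihilation (hf : ContDiff ℝ 1 f) (hc : HasCompactSupport f)
    (j : Fin d) :
    ∫ x, ‖annihilation j f x‖ ^ 2 = (∫ x, ‖partialDeriv j f x‖ ^ 2) +
      (∫ x, x j ^ 2 * ‖f x‖ ^ 2) - ∫ x, ‖f x‖ ^ 2 := by
  have hf0 {x : Ed d} (hx : x ∉ tsupport f) : f x = 0 := image_eq_zero_of_notMem_tsupport hx
  have h_norm (x : Ed d) : ‖annihilation j f x‖ ^ 2 = ‖partialDeriv j f x‖ ^ 2 +
      2 * (x j * ⟪partialDeriv j f x, f x⟫) + x j ^ 2 * ‖f x‖ ^ 2 := by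
    rw [annihilation, norm_add_sq_real, real_inner_smul_right, norm_smul, mul_pow,
      Real.norm_eq_abs, sq_abs]
  have h_cross := two_mul_integral_coord_mul_inner_partialDeriv hf hc
    (T := ContinuousLinearMap.id ℝ S) (fun _ _ => rfl) j j
  simp only [ContinuousLinearMap.id_apply, if_true, real_inner_self_eq_norm_sq] at h_cross
  have h_int₁ : Integrable fun x => ‖partialDeriv j f x‖ ^ 2 :=
    integrable_norm_sq_of_forall_notMem_tsupport_eq_zero hc (continuous_partialDeriv hf j)
      fun x hx => partialDeriv_of_notMem_tsupport hx j
  have h_int₂ : Integrable fun x => 2 * (x j * ⟪partialDeriv j f x, f x⟫) :=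
    integrable_of_forall_notMem_tsupport_eq_zero hc (.mul continuous_const
      (.mul (by fun_prop) ((continuous_partialDeriv hf j).inner hf.continuous)))
      fun x hx => by simp [hf0 hx]
  have h_int₃ : Integrable fun x : Ed d => x j ^ 2 * ‖f x‖ ^ 2 :=
    integrable_of_forall_notMem_tsupport_eq_zero hc (.mul (by fun_prop) (hf.continuous.norm.pow 2))
      fun x hx => by simp [hf0 hx]
  simp only [h_norm]
  rw [integral_add (by exact h_int₁.add h_int₂) h_int₃, integral_add h_int₁ h_int₂,
    integral_const_mul]
  linarith

theorem sum_integral_norm_sq_annihilation (hf : ContDiff ℝ 1 f) (hc : HasCompactSupport f) :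
    ∑ j, ∫ x, ‖annihilation j f x‖ ^ 2 = (∑ j, ∫ x, ‖partialDeriv j f x‖ ^ 2) +
      (∫ x, ‖x‖ ^ 2 * ‖f x‖ ^ 2) - d * ∫ x, ‖f x‖ ^ 2 := by
  have h_int (j : Fin d) : Integrable fun x : Ed d => x j ^ 2 * ‖f x‖ ^ 2 :=
    integrable_of_forall_notMem_tsupport_eq_zero hc (.mul (by fun_prop) (hf.continuous.norm.pow 2))
      fun x hx => by simp [image_eq_zero_of_notMem_tsupport hx]
  simp only [integral_norm_sq_annihilation hf hc, EuclideanSpace.real_norm_sq_eq, Finset.sum_mul]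
  rw [integral_finsetSum _ fun j _ => h_int j, Finset.sum_sub_distrib, Finset.sum_add_distrib]
  simp

theorem integral_norm_sq_Bop (h : IsCliffordPair e ε) (hf : ContDiff ℝ 2 f)
    (hc : HasCompactSupport f) :
    ∫ x, ‖Bop e ε f x‖ ^ 2 = (∑ j, ∫ x, ‖annihilation j f x‖ ^ 2) +
      ∫ x, (d * ‖f x‖ ^ 2 + ⟪f x, nuOp e ε (f x)⟫) := by
  have hf1 : ContDiff ℝ 1 f := hf.of_le one_le_two
  have h_int_f : Integrable fun x => d * ‖f x‖ ^ 2 :=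
    (integrable_norm_sq_of_forall_notMem_tsupport_eq_zero hc hf.continuous
      fun x hx => image_eq_zero_of_notMem_tsupport hx).const_mul _
  have h_int_nu : Integrable fun x => ⟪f x, nuOp e ε (f x)⟫ :=
    integrable_inner_of_forall_notMem_tsupport_eq_zero hc hf.continuous
      ((nuOp e ε).continuous.comp hf.continuous)
      fun x hx => by rw [image_eq_zero_of_notMem_tsupport hx, map_zero]
  have h_int_D : Integrable fun x => ‖Dop e f x‖ ^ 2 :=
    integrable_norm_sq_of_forall_notMem_tsupport_eq_zero hc (continuous_Dop hf1)
      fun x hx => Dop_of_notMem_tsupport hx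
  have h_int_F : Integrable fun x => ‖Fop ε f x‖ ^ 2 :=
    integrable_norm_sq_of_forall_notMem_tsupport_eq_zero hc (continuous_Fop hf.continuous)
      fun x hx => Fop_of_notMem_tsupport hx
  have h_int_DF : Integrable fun x => 2 * ⟪Dop e f x, Fop ε f x⟫ :=
    (integrable_inner_of_forall_notMem_tsupport_eq_zero hc (continuous_Dop hf1)
      (continuous_Fop hf.continuous) fun x hx => Fop_of_notMem_tsupport hx).const_mul 2
  calc ∫ x, ‖Bop e ε f x‖ ^ 2
      = (∫ x, ‖Dop e f x‖ ^ 2) + 2 * (∫ x, ⟪Dop e f x, Fop ε f x⟫) + ∫ x, ‖Fop ε f x‖ ^ 2 := by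
        simp only [Bop, norm_add_sq_real]
        rw [integral_add (by exact h_int_D.add h_int_DF) h_int_F, integral_add h_int_D h_int_DF,
          integral_const_mul]
    _ = (∑ j, ∫ x, ‖partialDeriv j f x‖ ^ 2) + (∫ x, ⟪f x, nuOp e ε (f x)⟫) +
          ∫ x, ‖x‖ ^ 2 * ‖f x‖ ^ 2 := by
        simp only [integral_norm_sq_Dop h.isHurwitzRadon_fst hf hc,
          two_mul_integral_inner_Dop_Fop h hf1 hc, norm_sq_Fop h.isHurwitzRadon_snd]
    _ = (∑ j, ∫ x, ‖annihilation j f x‖ ^ 2) +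
          ∫ x, (d * ‖f x‖ ^ 2 + ⟪f x, nuOp e ε (f x)⟫) := by
        rw [sum_integral_norm_sq_annihilation hf1 hc, integral_add h_int_f h_int_nu,
          integral_const_mul]
        ring

end Energy

section GroundState

theorem contDiff_gaussian (u : S) {n : WithTop ℕ∞} : ContDiff ℝ n (gaussian d u) :=
  (Real.contDiff_exp.comp ((contDiff_norm_sq ℝ).neg.div_const 2)).smul contDiff_const

theorem partialDeriv_exp_neg_norm_sq_div_two (j : Fin d) (x : Ed d) :
    partialDeriv j (fun y : Ed d => Real.exp (-‖y‖ ^ 2 / 2)) x =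
      -(x j * Real.exp (-‖x‖ ^ 2 / 2)) := by
  have h := ((hasStrictFDerivAt_norm_sq x).hasFDerivAt.fun_neg.mul_const (2⁻¹ : ℝ)).exp
  simp only [← div_eq_mul_inv] at h
  rw [partialDeriv, h.fderiv]
  simp [EuclideanSpace.inner_single_right]
  ring

theorem annihilation_exp_smul {F : Type*} [NormedAddCommGroup F] [NormedSpace ℝ F] {g : Ed d → F}
    {x : Ed d} (hg : DifferentiableAt ℝ g x) (j : Fin d) :
    annihilation j (fun y => Real.exp (-‖y‖ ^ 2 / 2) • g y) x =
      Real.exp (-‖x‖ ^ 2 / 2) • partialDeriv j g x := by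
  have h_exp : DifferentiableAt ℝ (fun y : Ed d => Real.exp (-‖y‖ ^ 2 / 2)) x :=
    (contDiff_norm_sq ℝ).neg.div_const 2 |>.exp.differentiable one_ne_zero x
  rw [annihilation, partialDeriv_smul h_exp hg, partialDeriv_exp_neg_norm_sq_div_two, neg_smul,
    mul_smul, neg_add_cancel_right]

theorem exists_eq_exp_smul {F : Type*} [NormedAddCommGroup F] [NormedSpace ℝ F] {n : WithTop ℕ∞}
    {f : Ed d → F} (hf : ContDiff ℝ n f) : ∃ g : Ed d → F, ContDiff ℝ n g ∧
      Function.support g = Function.support f ∧ f = fun x => Real.exp (-‖x‖ ^ 2 / 2) • g x := by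
  refine ⟨fun x => Real.exp (‖x‖ ^ 2 / 2) • f x,
    ((contDiff_norm_sq ℝ).div_const 2).exp.smul hf, ?_, funext fun x => ?_⟩
  · ext x
    simp [(Real.exp_pos _).ne']
  · rw [smul_smul, ← Real.exp_add, neg_div, neg_add_cancel, Real.exp_zero, one_smul]

theorem annihilation_gaussian (u : S) (j : Fin d) (x : Ed d) :
    annihilation j (gaussian d u) x = 0 := by
  refine (annihilation_exp_smul (differentiableAt_const u) j).trans ?_
  simp [partialDeriv]

theorem smul_gaussian (c : ℝ) (u : S) (x : Ed d) :
    c • gaussian d u x = gaussian d (c • u) x :=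
  smul_comm _ _ _

theorem norm_sq_gaussian (u : S) (x : Ed d) :
    ‖gaussian d u x‖ ^ 2 = Real.exp (-‖x‖ ^ 2) * ‖u‖ ^ 2 := by
  rw [gaussian, norm_smul, mul_pow, Real.norm_eq_abs, sq_abs, ← Real.exp_nat_mul, Nat.cast_two,
    mul_div_cancel₀ _ two_ne_zero]

theorem integral_norm_sq_gaussian_pos {u : S} (hu : u ≠ 0) : 0 < ∫ x, ‖gaussian d u x‖ ^ 2 := by
  simp only [norm_sq_gaussian, integral_mul_const]
  exact mul_pos (integral_exp_pos integrable_exp_neg_sq_norm) (pow_pos (norm_pos_iff.2 hu) 2)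

variable {e ε : Fin d → S →L[ℝ] S} {u : S} {f g : Ed d → S}

theorem Bop_gaussian (hvac : ∀ j, e j u = ε j u) (x : Ed d) : Bop e ε (gaussian d u) x = 0 := by
  have h_eq (j : Fin d) : ε j (gaussian d u x) = e j (gaussian d u x) := by
    rw [gaussian, map_smul, map_smul, hvac]
  simp only [Bop, Dop_apply, Fop, h_eq, ← map_smul, ← Finset.sum_add_distrib, ← map_add]
  exact Finset.sum_eq_zero fun j _ => (congrArg (e j) (annihilation_gaussian u j x)).trans
    (map_zero (e j))

theorem integral_inner_Dop (he : ∀ i (x y : S), ⟪e i x, y⟫ = -⟪x, e i y⟫) (hg : ContDiff ℝ 1 g)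
    (hf : ContDiff ℝ 1 f) (hc : HasCompactSupport f) :
    ∫ x, ⟪g x, Dop e f x⟫ = ∫ x, ⟪Dop e g x, f x⟫ := by
  have h_swap (j : Fin d) : ∫ x, ⟪g x, e j (partialDeriv j f x)⟫ =
      ∫ x, ⟪e j (partialDeriv j g x), f x⟫ := by
    have h := integral_inner_partialDeriv hg ((e j).contDiff.comp hf)
      (hc.comp_left (map_zero (e j))) j
    simpa only [Function.comp_def, partialDeriv_clm_comp _ (hf.differentiable one_ne_zero _),
      ← integral_neg, ← he] using h
  simp only [Dop_apply, inner_sum, sum_inner]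
  rw [integral_finsetSum, integral_finsetSum]
  · exact Finset.sum_congr rfl fun j _ => h_swap j
  · exact fun j _ => integrable_inner_of_forall_notMem_tsupport_eq_zero hc
      ((e j).continuous.comp (continuous_partialDeriv hg j)) hf.continuous
      fun x hx => image_eq_zero_of_notMem_tsupport hx
  · exact fun j _ => integrable_inner_of_forall_notMem_tsupport_eq_zero hc hg.continuous
      ((e j).continuous.comp (continuous_partialDeriv hf j))
      fun x hx => by rw [partialDeriv_of_notMem_tsupport hx, map_zero]

theorem inner_Fop (hε : ∀ i (x y : S), ⟪ε i x, y⟫ = ⟪x, ε i y⟫) (x : Ed d) :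
    ⟪g x, Fop ε f x⟫ = ⟪Fop ε g x, f x⟫ := by
  simp only [Fop, inner_sum, sum_inner, real_inner_smul_left, real_inner_smul_right, hε]

theorem integral_inner_Bop (he : ∀ i (x y : S), ⟪e i x, y⟫ = -⟪x, e i y⟫)
    (hε : ∀ i (x y : S), ⟪ε i x, y⟫ = ⟪x, ε i y⟫) (hg : ContDiff ℝ 1 g) (hf : ContDiff ℝ 1 f)
    (hc : HasCompactSupport f) :
    ∫ x, ⟪g x, Bop e ε f x⟫ = ∫ x, ⟪Bop e ε g x, f x⟫ := by
  have hf0 : ∀ x ∉ tsupport f, f x = 0 := fun _ hx => image_eq_zero_of_notMem_tsupport hx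
  simp only [Bop, inner_add_right, inner_add_left]
  rw [integral_add, integral_add, integral_inner_Dop he hg hf hc]
  · simp only [inner_Fop hε]
  · exact integrable_inner_of_forall_notMem_tsupport_eq_zero hc (continuous_Dop hg) hf.continuous
      hf0
  · exact integrable_inner_of_forall_notMem_tsupport_eq_zero hc (continuous_Fop hg.continuous)
      hf.continuous hf0
  · exact integrable_inner_of_forall_notMem_tsupport_eq_zero hc hg.continuous (continuous_Dop hf)
      fun x hx => Dop_of_notMem_tsupport hx
  · exact integrable_inner_of_forall_notMem_tsupport_eq_zero hc hg.continuous
      (continuous_Fop hf.continuous) fun x hx => Fop_of_notMem_tsupport hx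

end GroundState

section KernelProjection

variable {e ε : Fin d → S →L[ℝ] S} {u : S}

theorem kerProj_kerProj (hu : u ≠ 0) (f : Ed d → S) :
    kerProj d u (kerProj d u f) = kerProj d u f := by
  funext x
  simp only [kerProj, real_inner_smul_left, real_inner_self_eq_norm_sq, integral_const_mul]
  rw [mul_div_cancel_right₀ _ (integral_norm_sq_gaussian_pos hu).ne']

theorem kerProj_comp_grading {ι : S →L[ℝ] S} (hιsa : ∀ x y, ⟪ι x, y⟫ = ⟪x, ι y⟫) (hιu : ι u = u)
    (f : Ed d → S) (x : Ed d) : kerProj d u (fun y => ι (f y)) x = ι (kerProj d u f x) := by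
  have h_even (y : Ed d) : ι (gaussian d u y) = gaussian d u y := by rw [gaussian, map_smul, hιu]
  simp only [kerProj, hιsa, h_even, map_smul]

theorem Bop_kerProj (hvac : ∀ j, e j u = ε j u) (f : Ed d → S) (x : Ed d) :
    Bop e ε (kerProj d u f) x = 0 := by
  rw [show kerProj d u f = gaussian d _ from funext fun y => smul_gaussian _ u y]
  exact Bop_gaussian (fun j => by rw [map_smul, map_smul, hvac]) x

theorem kerProj_Bop (he : ∀ i (x y : S), ⟪e i x, y⟫ = -⟪x, e i y⟫)
    (hε : ∀ i (x y : S), ⟪ε i x, y⟫ = ⟪x, ε i y⟫) (hvac : ∀ j, e j u = ε j u) {f : Ed d → S}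
    (hf : ContDiff ℝ 1 f) (hc : HasCompactSupport f) (x : Ed d) :
    kerProj d u (Bop e ε f) x = 0 := by
  have h_orth : ∫ y, ⟪Bop e ε f y, gaussian d u y⟫ = 0 := by
    simp only [real_inner_comm (gaussian d u _)]
    rw [integral_inner_Bop he hε (contDiff_gaussian u) hf hc]
    simp only [Bop_gaussian hvac, inner_zero_left, integral_zero]
  rw [kerProj, h_orth, zero_div, zero_smul]

end KernelProjection

section OscillatorGap

theorem norm_sq_fderiv_eq_sum_partialDeriv (h : Ed d → ℝ) (x : Ed d) :
    ‖fderiv ℝ h x‖ ^ 2 = ∑ j, partialDeriv j h x ^ 2 := by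
  rw [(EuclideanSpace.basisFun (Fin d) ℝ).norm_dual]
  simp [partialDeriv]

theorem integral_sq_le_sum_integral_annihilation_sq {φ : Ed d → ℝ} (hφ : ContDiff ℝ 1 φ)
    (hc : HasCompactSupport φ) (h0 : ∫ x, Real.exp (-‖x‖ ^ 2 / 2) * φ x = 0) :
    ∫ x, φ x ^ 2 ≤ ∑ j, ∫ x, annihilation j φ x ^ 2 := by
  have h_int (j : Fin d) : Integrable fun x => annihilation j φ x ^ 2 :=
    integrable_of_forall_notMem_tsupport_eq_zero hc ((continuous_annihilation hφ j).pow 2)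
      fun x hx => by rw [annihilation_of_notMem_tsupport hx, zero_pow two_ne_zero]
  obtain ⟨h, hh, h_supp, rfl⟩ := exists_eq_exp_smul hφ
  have h_exp_sq (x : Ed d) : Real.exp (-‖x‖ ^ 2 / 2) ^ 2 = Real.exp (-‖x‖ ^ 2) := by
    rw [← Real.exp_nat_mul, Nat.cast_two, mul_div_cancel₀ _ two_ne_zero]
  have h_ann (j : Fin d) (x : Ed d) :
      annihilation j (fun y => Real.exp (-‖y‖ ^ 2 / 2) • h y) x ^ 2 =
        Real.exp (-‖x‖ ^ 2) * partialDeriv j h x ^ 2 := by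
    rw [annihilation_exp_smul (hh.differentiable one_ne_zero x), smul_eq_mul, mul_pow, h_exp_sq]
  obtain ⟨C, hC⟩ := ((hc.mono h_supp.le).fderiv (𝕜 := ℝ)).exists_bound_of_continuous
    (hh.continuous_fderiv one_ne_zero)
  have h_mean : ∫ x, Real.exp (-‖x‖ ^ 2) * h x = 0 := by
    simpa only [smul_eq_mul, ← mul_assoc, ← sq, h_exp_sq] using h0
  have h_poincare := integral_exp_neg_sq_norm_mul_sq_le hh hC h_mean
  rw [← integral_finsetSum _ fun j _ => h_int j]
  simp only [h_ann]
  simpa only [smul_eq_mul, mul_pow, h_exp_sq, ← Finset.mul_sum,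
    ← norm_sq_fderiv_eq_sum_partialDeriv] using h_poincare

end OscillatorGap

section CauchySchwarz

variable {V : Type*} [NormedAddCommGroup V] [InnerProductSpace ℝ V]

theorem inner_sq_div_le (u v : V) : ⟪u, v⟫ ^ 2 / ‖u‖ ^ 2 ≤ ‖v‖ ^ 2 := by
  refine div_le_of_le_mul₀ (sq_nonneg _) (sq_nonneg _) ?_
  rw [← mul_pow, mul_comm, ← sq_abs]
  exact pow_le_pow_left₀ (abs_nonneg _) (abs_real_inner_le_norm u v) 2

theorem exists_eq_smul_of_inner_sq_div_eq {u v : V} (hu : u ≠ 0)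
    (h : ⟪u, v⟫ ^ 2 / ‖u‖ ^ 2 = ‖v‖ ^ 2) : ∃ c : ℝ, v = c • u := by
  have h_abs : ‖⟪u, v⟫‖ = ‖u‖ * ‖v‖ := by
    rw [← sq_eq_sq₀ (norm_nonneg _) (by positivity), mul_pow, ← h, Real.norm_eq_abs, sq_abs,
      mul_div_cancel₀ _ (pow_ne_zero 2 (norm_ne_zero_iff.2 hu))]
  have h_iff : ‖⟪u, v⟫‖ = ‖u‖ * ‖v‖ ↔ u = 0 ∨ ∃ c : ℝ, v = c • u :=
    (norm_inner_eq_norm_tfae ℝ u v).out 0 2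
  exact (h_iff.1 h_abs).resolve_left hu

end CauchySchwarz

section SpectralGap

variable {e ε : Fin d → S →L[ℝ] S} {u : S} {f g : Ed d → S}

theorem integrable_norm_sq_annihilation (hf : ContDiff ℝ 1 f) (hc : HasCompactSupport f)
    (j : Fin d) : Integrable fun x => ‖annihilation j f x‖ ^ 2 :=
  integrable_norm_sq_of_forall_notMem_tsupport_eq_zero hc (continuous_annihilation hf j)
    fun _ hx => annihilation_of_notMem_tsupport hx j

/-- The density of the lower bound for `‖Bf‖²`: the oscillator energy above the ground state, plus
the squared length of the component of `f x` orthogonal to the vacuum `u`. -/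
def energyDensity (u : S) (f : Ed d → S) (x : Ed d) : ℝ :=
  (∑ j, ‖annihilation j f x‖ ^ 2) + (‖f x‖ ^ 2 - ⟪u, f x⟫ ^ 2 / ‖u‖ ^ 2)

theorem energyDensity_nonneg (u : S) (f : Ed d → S) (x : Ed d) : 0 ≤ energyDensity u f x :=
  add_nonneg (Finset.sum_nonneg fun _ _ => sq_nonneg _) (sub_nonneg.2 (inner_sq_div_le _ _))

theorem energyDensity_congr {x : Ed d} (hfg : f =ᶠ[nhds x] g) :
    energyDensity u f x = energyDensity u g x := by
  simp only [energyDensity, annihilation, partialDeriv, hfg.fderiv_eq, hfg.eq_of_nhds]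

theorem continuous_energyDensity (u : S) (hf : ContDiff ℝ 1 f) :
    Continuous (energyDensity u f) := by
  have h_ann := continuous_annihilation hf
  have h_cont := hf.continuous
  unfold energyDensity
  fun_prop

theorem integrable_energyDensity (u : S) (hf : ContDiff ℝ 1 f) (hc : HasCompactSupport f) :
    Integrable (energyDensity u f) :=
  integrable_of_forall_notMem_tsupport_eq_zero hc (continuous_energyDensity u hf) fun x hx => by
    simp [energyDensity, annihilation_of_notMem_tsupport hx, image_eq_zero_of_notMem_tsupport hx]

theorem integral_energyDensity_le (h : IsCliffordPair e ε) (hdim : Module.finrank ℝ S = 2 ^ d)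
    (hu : u ≠ 0) (hvac : ∀ j, e j u = ε j u) (hf : ContDiff ℝ 2 f) (hc : HasCompactSupport f) :
    ∫ x, energyDensity u f x ≤ ∫ x, ‖Bop e ε f x‖ ^ 2 := by
  have hf1 : ContDiff ℝ 1 f := hf.of_le one_le_two
  have h_int_ann := integrable_norm_sq_annihilation hf1 hc
  have h_int_fibre : Integrable fun x => d * ‖f x‖ ^ 2 + ⟪f x, nuOp e ε (f x)⟫ :=
    integrable_of_forall_notMem_tsupport_eq_zero hc
      (.add (.mul continuous_const (hf.continuous.norm.pow 2))
        (hf.continuous.inner ((nuOp e ε).continuous.comp hf.continuous)))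
      fun x hx => by simp [image_eq_zero_of_notMem_tsupport hx]
  rw [integral_norm_sq_Bop h hf hc, ← integral_finsetSum _ fun j _ => h_int_ann j,
    ← integral_add (integrable_finsetSum _ fun j _ => h_int_ann j) h_int_fibre]
  exact integral_mono (integrable_energyDensity u hf1 hc)
    ((integrable_finsetSum _ fun j _ => h_int_ann j).add h_int_fibre)
    fun x => add_le_add_right (h.norm_sq_sub_le hdim hu hvac (f x)) _

theorem integral_inner_sq_div_le (hf : ContDiff ℝ 1 f) (hc : HasCompactSupport f)
    (h0 : ∫ x, ⟪f x, gaussian d u x⟫ = 0) :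
    ∫ x, ⟪u, f x⟫ ^ 2 / ‖u‖ ^ 2 ≤ ∑ j, ∫ x, ‖annihilation j f x‖ ^ 2 := by
  have h_ann (j : Fin d) (x : Ed d) :
      annihilation j (fun y => ⟪u, f y⟫) x = ⟪u, annihilation j f x⟫ :=
    annihilation_clm_comp (innerSL ℝ u) (hf.differentiable one_ne_zero x) j
  have h_mean : ∫ x, Real.exp (-‖x‖ ^ 2 / 2) * ⟪u, f x⟫ = 0 := by
    simpa only [gaussian, real_inner_smul_right, real_inner_comm u] using h0
  have h_gap := integral_sq_le_sum_integral_annihilation_sq (contDiff_const.inner ℝ hf)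
    (hc.comp_left (inner_zero_right u)) h_mean
  simp only [h_ann] at h_gap
  calc ∫ x, ⟪u, f x⟫ ^ 2 / ‖u‖ ^ 2
      ≤ ∑ j, ∫ x, ⟪u, annihilation j f x⟫ ^ 2 / ‖u‖ ^ 2 := by
        simp only [integral_div, ← Finset.sum_div]
        gcongr
    _ ≤ ∑ j, ∫ x, ‖annihilation j f x‖ ^ 2 := Finset.sum_le_sum fun j _ =>
        integral_mono_of_nonneg (.of_forall fun x => by positivity)
          (integrable_norm_sq_annihilation hf hc j) (.of_forall fun x => inner_sq_div_le _ _)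

theorem integral_norm_sq_le_integral_energyDensity (hf : ContDiff ℝ 1 f)
    (hc : HasCompactSupport f) (h0 : ∫ x, ⟪f x, gaussian d u x⟫ = 0) :
    ∫ x, ‖f x‖ ^ 2 ≤ ∫ x, energyDensity u f x := by
  have hf0 : ∀ x ∉ tsupport f, f x = 0 := fun _ hx => image_eq_zero_of_notMem_tsupport hx
  have h_int_f : Integrable fun x => ‖f x‖ ^ 2 :=
    integrable_norm_sq_of_forall_notMem_tsupport_eq_zero hc hf.continuous hf0
  have h_int_vac : Integrable fun x => ⟪u, f x⟫ ^ 2 / ‖u‖ ^ 2 :=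
    integrable_of_forall_notMem_tsupport_eq_zero hc
      (((continuous_const.inner hf.continuous).pow 2).div_const _) fun x hx => by simp [hf0 x hx]
  have h_int_ann := integrable_norm_sq_annihilation hf hc
  have h_split : ∫ x, energyDensity u f x = (∑ j, ∫ x, ‖annihilation j f x‖ ^ 2) +
      ((∫ x, ‖f x‖ ^ 2) - ∫ x, ⟪u, f x⟫ ^ 2 / ‖u‖ ^ 2) := by
    rw [← integral_finsetSum _ fun j _ => h_int_ann j, ← integral_sub h_int_f h_int_vac]
    exact integral_add (integrable_finsetSum _ fun j _ => h_int_ann j) (h_int_f.sub h_int_vac)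
  linarith [integral_inner_sq_div_le hf hc h0]

theorem integral_norm_sq_le_integral_norm_sq_Bop (h : IsCliffordPair e ε)
    (hdim : Module.finrank ℝ S = 2 ^ d) (hu : u ≠ 0) (hvac : ∀ j, e j u = ε j u)
    (hf : ContDiff ℝ 2 f) (hc : HasCompactSupport f) (h0 : ∫ x, ⟪f x, gaussian d u x⟫ = 0) :
    ∫ x, ‖f x‖ ^ 2 ≤ ∫ x, ‖Bop e ε f x‖ ^ 2 :=
  (integral_norm_sq_le_integral_energyDensity (hf.of_le one_le_two) hc h0).trans
    (integral_energyDensity_le h hdim hu hvac hf hc)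

end SpectralGap

section Kernel

variable {e ε : Fin d → S →L[ℝ] S} {u : S} {f : Ed d → S}

theorem exists_contDiff_cutoff (E : Type*) [NormedAddCommGroup E] [NormedSpace ℝ E]
    [FiniteDimensional ℝ E] : ∃ M : ℝ, ∀ R : ℝ, 0 < R → ∃ χ : E → ℝ,
      ContDiff ℝ (⊤ : ℕ∞) χ ∧ HasCompactSupport χ ∧ (∀ x ∈ Metric.ball (0 : E) R, χ x = 1) ∧
        ∀ x, ‖fderiv ℝ χ x‖ ≤ M / R := by
  let b : ContDiffBump (0 : E) := ⟨1, 2, one_pos, one_lt_two⟩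
  obtain ⟨M, hM⟩ := (b.hasCompactSupport.fderiv (𝕜 := ℝ)).exists_bound_of_continuous
    (b.contDiff.continuous_fderiv one_ne_zero)
  refine ⟨M, fun R hR => ⟨fun x => b (R⁻¹ • x), b.contDiff.comp (contDiff_const_smul _),
    b.hasCompactSupport.comp_smul (inv_ne_zero hR.ne'), fun x hx => ?_, fun x => ?_⟩⟩
  · refine b.one_of_mem_closedBall (mem_closedBall_zero_iff.2 ?_)
    rw [norm_smul, norm_inv, Real.norm_of_nonneg hR.le]
    exact inv_mul_le_one_of_le₀ (mem_ball_zero_iff.1 hx).le hR.le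
  · rw [fderiv_comp_smul, norm_smul, norm_inv, Real.norm_of_nonneg hR.le, div_eq_inv_mul]
    gcongr
    exact hM _

theorem Bop_smul {χ : Ed d → ℝ} {x : Ed d} (hχ : DifferentiableAt ℝ χ x)
    (hf : DifferentiableAt ℝ f x) : Bop e ε (fun y => χ y • f y) x =
      χ x • Bop e ε f x + ∑ j, partialDeriv j χ x • e j (f x) := by
  simp only [Bop, Dop_apply, Fop, partialDeriv_smul hχ hf, map_add, map_smul,
    Finset.sum_add_distrib, smul_add, Finset.smul_sum, smul_comm (χ x)]
  abel

theorem norm_sq_Bop_smul_of_Bop_eq_zero (he : IsHurwitzRadon e) {χ : Ed d → ℝ} {x : Ed d}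
    (hχ : DifferentiableAt ℝ χ x) (hf : DifferentiableAt ℝ f x) (hB : Bop e ε f x = 0) :
    ‖Bop e ε (fun y => χ y • f y) x‖ ^ 2 = ‖fderiv ℝ χ x‖ ^ 2 * ‖f x‖ ^ 2 := by
  rw [Bop_smul hχ hf, hB, smul_zero, zero_add, he.norm_sq_sum_smul,
    norm_sq_fderiv_eq_sum_partialDeriv]

theorem setIntegral_energyDensity_le_of_Bop_eq_zero (h : IsCliffordPair e ε)
    (hdim : Module.finrank ℝ S = 2 ^ d) (hu : u ≠ 0) (hvac : ∀ j, e j u = ε j u)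
    (hf : ContDiff ℝ 2 f) (hint : Integrable fun x => ‖f x‖ ^ 2) (hB : ∀ x, Bop e ε f x = 0)
    {χ : Ed d → ℝ} (hχ : ContDiff ℝ 2 χ) (hχc : HasCompactSupport χ) {U : Set (Ed d)}
    (hU : IsOpen U) (hχU : ∀ x ∈ U, χ x = 1) {C : ℝ} (hC : ∀ x, ‖fderiv ℝ χ x‖ ≤ C) :
    ∫ x in U, energyDensity u f x ≤ C ^ 2 * ∫ x, ‖f x‖ ^ 2 := by
  have h_Bop (x : Ed d) := norm_sq_Bop_smul_of_Bop_eq_zero h.isHurwitzRadon_fst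
    (hχ.differentiable two_ne_zero x) (hf.differentiable two_ne_zero x) (hB x)
  have h_loc : ∀ x ∈ U, energyDensity u f x = energyDensity u (fun y => χ y • f y) x :=
    fun x hx => energyDensity_congr <| by
      filter_upwards [hU.mem_nhds hx] with y hy
      rw [hχU y hy, one_smul]
  have h_smul : ContDiff ℝ 2 fun y => χ y • f y := hχ.smul hf
  calc ∫ x in U, energyDensity u f x
      = ∫ x in U, energyDensity u (fun y => χ y • f y) x :=
        setIntegral_congr_fun hU.measurableSet h_loc
    _ ≤ ∫ x, energyDensity u (fun y => χ y • f y) x :=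
        setIntegral_le_integral
          (integrable_energyDensity u (h_smul.of_le one_le_two) hχc.smul_right)
          (.of_forall fun x => energyDensity_nonneg u _ x)
    _ ≤ ∫ x, ‖Bop e ε (fun y => χ y • f y) x‖ ^ 2 :=
        integral_energyDensity_le h hdim hu hvac h_smul hχc.smul_right
    _ ≤ ∫ x, C ^ 2 * ‖f x‖ ^ 2 := by
        simp only [h_Bop]
        refine integral_mono_of_nonneg (.of_forall fun x => by positivity) (hint.const_mul _)
          (.of_forall fun x => ?_)
        dsimp only
        gcongr
        exact hC x
    _ = C ^ 2 * ∫ x, ‖f x‖ ^ 2 := integral_const_mul _ _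

theorem energyDensity_eq_zero_of_Bop_eq_zero (h : IsCliffordPair e ε)
    (hdim : Module.finrank ℝ S = 2 ^ d) (hu : u ≠ 0) (hvac : ∀ j, e j u = ε j u)
    (hf : ContDiff ℝ 2 f) (hint : Integrable fun x => ‖f x‖ ^ 2) (hB : ∀ x, Bop e ε f x = 0)
    (x : Ed d) : energyDensity u f x = 0 := by
  have h_cont := continuous_energyDensity u (hf.of_le one_le_two)
  set U := Metric.ball (0 : Ed d) (‖x‖ + 1)
  obtain ⟨M, hM⟩ := exists_contDiff_cutoff (Ed d)
  have h_bound (R : ℝ) (hR : ‖x‖ + 1 ≤ R) :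
      ∫ y in U, energyDensity u f y ≤ (M / R) ^ 2 * ∫ y, ‖f y‖ ^ 2 := by
    obtain ⟨χ, hχ, hχc, hχ1, hχ_deriv⟩ := hM R (by linarith [norm_nonneg x])
    exact setIntegral_energyDensity_le_of_Bop_eq_zero h hdim hu hvac hf hint hB
      (contDiff_infty.1 hχ 2) hχc Metric.isOpen_ball
      (fun y hy => hχ1 y (Metric.ball_subset_ball hR hy)) hχ_deriv
  have h_lim : Filter.Tendsto (fun R : ℝ => (M / R) ^ 2 * ∫ y, ‖f y‖ ^ 2) Filter.atTop
      (nhds 0) := by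
    simpa using ((Filter.tendsto_id.const_div_atTop M).pow 2).mul_const (∫ y, ‖f y‖ ^ 2)
  have h_le : ∫ y in U, energyDensity u f y ≤ 0 :=
    ge_of_tendsto h_lim ((Filter.eventually_ge_atTop _).mono h_bound)
  have h_int : IntegrableOn (energyDensity u f) U :=
    (h_cont.continuousOn.integrableOn_compact (isCompact_closedBall 0 _)).mono_set
      Metric.ball_subset_closedBall
  have h_ae : energyDensity u f =ᵐ[volume.restrict U] 0 :=
    (setIntegral_eq_zero_iff_of_nonneg_ae
      (.of_forall fun y => energyDensity_nonneg u f y) h_int).1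
      (h_le.antisymm (integral_nonneg fun y => energyDensity_nonneg u f y))
  exact Measure.eqOn_open_of_ae_eq h_ae Metric.isOpen_ball h_cont.continuousOn
    continuousOn_const (by simp [U])

theorem exists_eq_smul_gaussian_of_energyDensity_eq_zero (hu : u ≠ 0) (hf : ContDiff ℝ 1 f)
    (h0 : ∀ x, energyDensity u f x = 0) : ∃ c : ℝ, f = fun x => c • gaussian d u x := by
  have h_parts (x : Ed d) := (add_eq_zero_iff_of_nonneg
    (Finset.sum_nonneg fun _ _ => sq_nonneg _) (sub_nonneg.2 (inner_sq_div_le u (f x)))).1 (h0 x)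
  have h_ann (j : Fin d) (x : Ed d) : annihilation j f x = 0 := by
    have h_sq := (Finset.sum_eq_zero_iff_of_nonneg fun _ _ => sq_nonneg _).1 (h_parts x).1 j
      (Finset.mem_univ j)
    simpa using h_sq
  obtain ⟨g, hg, -, rfl⟩ := exists_eq_exp_smul hf
  have hg_diff : Differentiable ℝ g := hg.differentiable one_ne_zero
  have h_deriv (x : Ed d) : fderiv ℝ g x = 0 := by
    refine ContinuousLinearMap.coe_injective
      ((EuclideanSpace.basisFun (Fin d) ℝ).toBasis.ext fun j => ?_)
    have h_zero := h_ann j x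
    rw [annihilation_exp_smul (hg_diff x), smul_eq_zero_iff_right (Real.exp_pos _).ne'] at h_zero
    simpa [partialDeriv] using h_zero
  obtain ⟨c, hc⟩ : ∃ c : ℝ, g 0 = c • u :=
    exists_eq_smul_of_inner_sq_div_eq hu (by simpa using (sub_eq_zero.1 (h_parts 0).2).symm)
  refine ⟨c, funext fun x => ?_⟩
  rw [is_const_of_fderiv_eq_zero hg_diff h_deriv x 0, hc, gaussian, smul_comm]

theorem exists_eq_smul_gaussian_of_Bop_eq_zero (h : IsCliffordPair e ε)
    (hdim : Module.finrank ℝ S = 2 ^ d) (hu : u ≠ 0) (hvac : ∀ j, e j u = ε j u)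
    (hf : ContDiff ℝ 2 f) (hint : Integrable fun x => ‖f x‖ ^ 2) (hB : ∀ x, Bop e ε f x = 0) :
    ∃ c : ℝ, f = fun x => c • gaussian d u x :=
  exists_eq_smul_gaussian_of_energyDensity_eq_zero hu (hf.of_le one_le_two)
    (energyDensity_eq_zero_of_Bop_eq_zero h hdim hu hvac hf hint hB)

end Kernel

theorem kernel_projection_of_bott_dirac
    (d : ℕ) (S : Type) [NormedAddCommGroup S] [InnerProductSpace ℝ S]
    (e ε : Fin d → S →L[ℝ] S)
    (hdim : Module.finrank ℝ S = 2 ^ d)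
    (hee : ∀ i j (x : S), e i (e j x) + e j (e i x) = if i = j then (-2 : ℝ) • x else 0)
    (hεε : ∀ i j (x : S), ε i (ε j x) + ε j (ε i x) = if i = j then (2 : ℝ) • x else 0)
    (heε : ∀ i j (x : S), e i (ε j x) + ε j (e i x) = 0)
    (he' : ∀ i (x y : S), ⟪e i x, y⟫ = -⟪x, e i y⟫)
    (hε' : ∀ i (x y : S), ⟪ε i x, y⟫ = ⟪x, ε i y⟫)
    (u : S) (hu : u ≠ 0) (hvac : ∀ j, e j u = ε j u)
    (ι : S →L[ℝ] S) (hι2 : ∀ x, ι (ι x) = x) (hιsa : ∀ x y, ⟪ι x, y⟫ = ⟪x, ι y⟫)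
    (hιe : ∀ j x, ι (e j x) = -e j (ι x)) (hιε : ∀ j x, ι (ε j x) = -ε j (ι x))
    (hιu : ι u = u) :
    -- the kernel of `B` is spanned by the Gaussian: it is a rank-one kernel
    (∀ x, Bop e ε (gaussian d u) x = 0) ∧
    (∀ f : Ed d → S, ContDiff ℝ (⊤ : ℕ∞) f → Integrable (fun x => ‖f x‖ ^ 2) →
      (∀ x, Bop e ε f x = 0) → ∃ c : ℝ, f = fun x => c • gaussian d u x) ∧
    -- `p₀` is a projection …
    (∀ f : Ed d → S, Integrable (fun y => ⟪f y, gaussian d u y⟫) →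
      kerProj d u (kerProj d u f) = kerProj d u f) ∧
    -- … commuting with the grading `ι` …
    (∀ (f : Ed d → S) (x : Ed d),
      kerProj d u (fun y => ι (f y)) x = ι (kerProj d u f x)) ∧
    -- … and with `B`: `B p₀ = 0 = p₀ B` (on the initial domain)
    (∀ (f : Ed d → S) (x : Ed d), Bop e ε (kerProj d u f) x = 0) ∧
    (∀ f : Ed d → S, ContDiff ℝ (⊤ : ℕ∞) f → HasCompactSupport f →
      ∀ x, kerProj d u (Bop e ε f) x = 0) ∧
    -- on `Im (1 − p₀)` one has `B² ≥ 1`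
    (∀ f : Ed d → S, ContDiff ℝ (⊤ : ℕ∞) f → HasCompactSupport f →
      (∫ x, ⟪f x, gaussian d u x⟫) = 0 →
      (∫ x, ‖Bop e ε f x‖ ^ 2) ≥ ∫ x, ‖f x‖ ^ 2) := by
  have h : IsCliffordPair e ε := ⟨hee, hεε, heε, he', hε'⟩
  refine ⟨Bop_gaussian hvac, fun f hf hint hB => ?_, fun f _ => kerProj_kerProj hu f,
    kerProj_comp_grading hιsa hιu, Bop_kerProj hvac, fun f hf hc => ?_, fun f hf hc h0 => ?_⟩
  · exact exists_eq_smul_gaussian_of_Bop_eq_zero h hdim hu hvac (contDiff_infty.1 hf 2) hint hB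
  · exact kerProj_Bop he' hε' hvac (contDiff_infty.1 hf 1) hc
  · exact integral_norm_sq_le_integral_norm_sq_Bop h hdim hu hvac (contDiff_infty.1 hf 2) hc h0
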